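/- Let v : ℝ → ℝ → ℝ be a smooth function of (x,t) with v_x(x,t) ≠ 0 for all (x,t), satisfying the 3rd potential Kupershmidt equation v_t = v_{5x} - 5·v_{xx}v_{4x}/v_x + 5·v_{xx}²v_{xxx}/v_x². Then h := v⁴·v_x^{-2} satisfies h_t = ∂_x[ h_{4x} - 5·h_xh_{xxx}/h - (15/4)·h_{xx}²/h + (65/4)·h_x²h_{xx}/h² - (135/16)·h_x⁴/h³ ] wherever v(x,t) ≠ 0, where ∂_x denotes the partial derivative with respect to x of the bracketed expression. -/

import Mathlib

/-!
The identity becomes polynomial after passing to logarithmic derivatives. Put `a = v_x / v` and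
`b = v_xx / v_x`, so that `a_x = a b - a²`, and `w = h_x / h = 4 a - 2 b`. The `x`-derivatives of a
function `g` with `g_x = g w` are `g` times polynomials in the jets of `w` (`log_jets`). Applied to
`h`, this rewrites the bracket as `h B` with
`B = w₃ - w w₂ - (3/4) w₁² - (1/4) w² w₁ + (1/16) w⁴` (`deriv_bracket`), and applied to `v_x`, it
turns the Kupershmidt equation into `v_t = v_x K` with
`K = b₃ - b b₂ + 3 b₁² - 4 b² b₁ + b⁴`. Since mixed partial derivatives commute,
`h_t / h = 4 v_t / v - 2 v_xt / v_x = 4 a K - 2 (b K + K_x)`, and the claim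
`4 a K - 2 (b K + K_x) = w B + B_x` is a polynomial identity in `a` and the jets of `b`.
-/

/-- Total `x`-derivative of a function of `(x, t)`. -/
noncomputable def dx (f : ℝ → ℝ → ℝ) : ℝ → ℝ → ℝ := fun x t => deriv (fun y => f y t) x

/-- Total `t`-derivative of a function of `(x, t)`. -/
noncomputable def dt (f : ℝ → ℝ → ℝ) : ℝ → ℝ → ℝ := fun x t => deriv (fun s => f x s) t

/-- The 3rd potential Kupershmidt equation. -/
def Kup3 (v : ℝ → ℝ → ℝ) : Prop :=
  ∀ x t, dt v x t =
    dx (dx (dx (dx (dx v)))) x t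
    - 5 * dx (dx v) x t * dx (dx (dx (dx v))) x t / dx v x t
    + 5 * (dx (dx v) x t)^2 * dx (dx (dx v)) x t / (dx v x t)^2

/-- Joint smoothness of a curried function of `(x, t)`. -/
def Smooth2 (f : ℝ → ℝ → ℝ) : Prop := ContDiff ℝ (⊤ : ℕ∞) (fun p : ℝ × ℝ => f p.1 p.2)

namespace Smooth2

variable {f : ℝ → ℝ → ℝ}

lemma hasDerivAt_fderiv_x (hf : Smooth2 f) (x t : ℝ) :
    HasDerivAt (fun y => f y t) (fderiv ℝ (fun p : ℝ × ℝ => f p.1 p.2) (x, t) (1, 0)) x := by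
  have h1 : HasFDerivAt (fun p : ℝ × ℝ => f p.1 p.2) _ (x, t) :=
    (hf.differentiable (by simp) (x, t)).hasFDerivAt
  have h2 : HasDerivAt (fun y : ℝ => (y, t)) ((1 : ℝ), (0 : ℝ)) x :=
    (hasDerivAt_id x).prodMk (hasDerivAt_const x t)
  exact HasFDerivAt.comp_hasDerivAt x h1 h2

lemma hasDerivAt_fderiv_t (hf : Smooth2 f) (x t : ℝ) :
    HasDerivAt (fun s => f x s) (fderiv ℝ (fun p : ℝ × ℝ => f p.1 p.2) (x, t) (0, 1)) t := by
  have h1 : HasFDerivAt (fun p : ℝ × ℝ => f p.1 p.2) _ (x, t) :=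
    (hf.differentiable (by simp) (x, t)).hasFDerivAt
  have h2 : HasDerivAt (fun s : ℝ => (x, s)) ((0 : ℝ), (1 : ℝ)) t :=
    (hasDerivAt_const t x).prodMk (hasDerivAt_id t)
  exact HasFDerivAt.comp_hasDerivAt t h1 h2

lemma dx_eq (hf : Smooth2 f) :
    dx f = fun x t => fderiv ℝ (fun p : ℝ × ℝ => f p.1 p.2) (x, t) (1, 0) := by
  funext x t
  exact (hf.hasDerivAt_fderiv_x x t).deriv

lemma dt_eq (hf : Smooth2 f) :
    dt f = fun x t => fderiv ℝ (fun p : ℝ × ℝ => f p.1 p.2) (x, t) (0, 1) := by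
  funext x t
  exact (hf.hasDerivAt_fderiv_t x t).deriv

lemma hasDerivAt_x (hf : Smooth2 f) (x t : ℝ) : HasDerivAt (fun y => f y t) (dx f x t) x :=
  (hf.hasDerivAt_fderiv_x x t).differentiableAt.hasDerivAt

lemma hasDerivAt_t (hf : Smooth2 f) (x t : ℝ) : HasDerivAt (fun s => f x s) (dt f x t) t :=
  (hf.hasDerivAt_fderiv_t x t).differentiableAt.hasDerivAt

lemma contDiff_fderiv (hf : Smooth2 f) :
    ContDiff ℝ (⊤ : ℕ∞) (fderiv ℝ (fun p : ℝ × ℝ => f p.1 p.2)) :=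
  ContDiff.fderiv_right hf (by simp)

lemma dx (hf : Smooth2 f) : Smooth2 (dx f) := by
  rw [hf.dx_eq]
  exact hf.contDiff_fderiv.clm_apply contDiff_const

lemma dt (hf : Smooth2 f) : Smooth2 (dt f) := by
  rw [hf.dt_eq]
  exact hf.contDiff_fderiv.clm_apply contDiff_const

lemma dt_dx (hf : Smooth2 f) (x t : ℝ) :
    _root_.dt (_root_.dx f) x t = _root_.dx (_root_.dt f) x t := by
  have hd : HasFDerivAt (fderiv ℝ (fun p : ℝ × ℝ => f p.1 p.2)) _ (x, t) :=
    (hf.contDiff_fderiv.differentiable (by simp) (x, t)).hasFDerivAt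
  have happ (e : ℝ × ℝ) := hd.clm_apply (hasFDerivAt_const e (x, t))
  have hsymm : IsSymmSndFDerivAt ℝ (fun p : ℝ × ℝ => f p.1 p.2) (x, t) :=
    (ContDiff.contDiffAt hf).isSymmSndFDerivAt (by
      rw [minSmoothness_of_isRCLikeNormedField]
      exact WithTop.coe_le_coe.2 le_top)
  rw [hf.dx.dt_eq, hf.dt.dx_eq, hf.dx_eq, hf.dt_eq]
  simp only [Prod.mk.eta]
  rw [(happ (1, 0)).fderiv, (happ (0, 1)).fderiv]
  simpa using hsymm (0, 1) (1, 0)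

end Smooth2

lemma deriv_eq_of_eqOn {U : Set ℝ} (hU : IsOpen U) {f g g' : ℝ → ℝ}
    (hfg : ∀ x ∈ U, f x = g x) (hg : ∀ x ∈ U, HasDerivAt g (g' x) x) :
    ∀ x ∈ U, deriv f x = g' x := fun x hx =>
  ((hg x hx).congr_of_eventuallyEq
    (Filter.eventuallyEq_of_mem (hU.mem_nhds hx) hfg)).deriv

/-- If `w` is the logarithmic derivative of `g`, the derivatives of `g` are `g` times the
complete Bell polynomials in the jets of `w`. -/
lemma log_jets {U : Set ℝ} (hU : IsOpen U) {g w w1 w2 w3 : ℝ → ℝ}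
    (hg : ∀ x ∈ U, HasDerivAt g (g x * w x) x)
    (hw : ∀ x ∈ U, HasDerivAt w (w1 x) x)
    (hw1 : ∀ x ∈ U, HasDerivAt w1 (w2 x) x)
    (hw2 : ∀ x ∈ U, HasDerivAt w2 (w3 x) x) :
    (∀ x ∈ U, deriv g x = g x * w x) ∧
    (∀ x ∈ U, deriv (deriv g) x = g x * (w1 x + w x ^ 2)) ∧
    (∀ x ∈ U, deriv (deriv (deriv g)) x = g x * (w2 x + 3 * w x * w1 x + w x ^ 3)) ∧
    (∀ x ∈ U, deriv (deriv (deriv (deriv g))) x =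
      g x * (w3 x + 4 * w x * w2 x + 3 * w1 x ^ 2 + 6 * w x ^ 2 * w1 x + w x ^ 4)) := by
  have d1 : ∀ x ∈ U, deriv g x = g x * w x := fun x hx => (hg x hx).deriv
  have d2 : ∀ x ∈ U, deriv (deriv g) x = g x * (w1 x + w x ^ 2) := by
    refine deriv_eq_of_eqOn hU d1 fun x hx => ?_
    refine HasDerivAt.congr_deriv ((hg x hx).mul (hw x hx) :) ?_
    ring
  have d3 : ∀ x ∈ U, deriv (deriv (deriv g)) x =
      g x * (w2 x + 3 * w x * w1 x + w x ^ 3) := by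
    refine deriv_eq_of_eqOn hU d2 fun x hx => ?_
    refine HasDerivAt.congr_deriv ((hg x hx).mul ((hw1 x hx).add ((hw x hx).pow 2)) :) ?_
    simp only [Pi.add_apply, Pi.pow_apply]
    push_cast
    ring
  refine ⟨d1, d2, d3, deriv_eq_of_eqOn hU d3 fun x hx => ?_⟩
  refine HasDerivAt.congr_deriv ((hg x hx).mul (((hw2 x hx).add (((hw x hx).const_mul 3).mul (hw1 x hx))).add
    ((hw x hx).pow 3)) :) ?_
  simp only [Pi.add_apply, Pi.pow_apply, Pi.mul_apply]
  push_cast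
  ring

/-- The right-hand side of the differentiated 2nd potential Kupershmidt equation in terms of the
logarithmic derivative `w` of `g`. -/
lemma deriv_bracket {U : Set ℝ} (hU : IsOpen U) {g w w1 w2 w3 w4 : ℝ → ℝ}
    (hg0 : ∀ x ∈ U, g x ≠ 0)
    (hg : ∀ x ∈ U, HasDerivAt g (g x * w x) x)
    (hw : ∀ x ∈ U, HasDerivAt w (w1 x) x)
    (hw1 : ∀ x ∈ U, HasDerivAt w1 (w2 x) x)
    (hw2 : ∀ x ∈ U, HasDerivAt w2 (w3 x) x)
    (hw3 : ∀ x ∈ U, HasDerivAt w3 (w4 x) x) :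
    ∀ x ∈ U, deriv (fun y => deriv (deriv (deriv (deriv g))) y
        - 5 * deriv g y * deriv (deriv (deriv g)) y / g y
        - (15/4) * (deriv (deriv g) y)^2 / g y
        + (65/4) * (deriv g y)^2 * deriv (deriv g) y / (g y)^2
        - (135/16) * (deriv g y)^4 / (g y)^3) x =
      g x * (w x * (w3 x - w x * w2 x - 3/4 * w1 x ^ 2 - 1/4 * w x ^ 2 * w1 x + 1/16 * w x ^ 4)
        + (w4 x - w x * w3 x - 5/2 * w1 x * w2 x - 1/2 * w x * w1 x ^ 2 - 1/4 * w x ^ 2 * w2 x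
          + 1/4 * w x ^ 3 * w1 x)) := by
  obtain ⟨d1, d2, d3, d4⟩ := log_jets hU hg hw hw1 hw2
  refine deriv_eq_of_eqOn hU (g := fun y => g y * (w3 y - w y * w2 y - 3/4 * w1 y ^ 2
    - 1/4 * w y ^ 2 * w1 y + 1/16 * w y ^ 4)) (fun x hx => ?_) fun x hx => ?_
  · rw [d1 x hx, d2 x hx, d3 x hx, d4 x hx]
    have := hg0 x hx
    field_simp
    ring
  · refine HasDerivAt.congr_deriv ((hg x hx).mul (((((hw3 x hx).sub ((hw x hx).mul (hw2 x hx))).sub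
      (((hw1 x hx).pow 2).const_mul (3/4))).sub
      ((((hw x hx).pow 2).const_mul (1/4)).mul (hw1 x hx))).add
      (((hw x hx).pow 4).const_mul (1/16))) :) ?_
    simp only [Pi.add_apply, Pi.sub_apply, Pi.pow_apply, Pi.mul_apply]
    push_cast
    ring

/-- If `v` solves the 3rd potential Kupershmidt equation, then `h = v⁴·v_x^{-2}` solves
the `x`-differentiated 2nd potential Kupershmidt equation wherever `v ≠ 0`. -/
theorem kup3_second_potentialisation
    (v : ℝ → ℝ → ℝ)
    (hv : ContDiff ℝ (⊤ : ℕ∞) (fun p : ℝ × ℝ => v p.1 p.2))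
    (hvx : ∀ x t, dx v x t ≠ 0)
    (heq : Kup3 v)
    (h : ℝ → ℝ → ℝ)
    (hh : ∀ x t, h x t = (v x t)^4 * (dx v x t) ^ (-2 : ℤ)) :
    ∀ x t, v x t ≠ 0 →
      dt h x t =
      dx (fun x t =>
        dx (dx (dx (dx h))) x t
        - 5 * dx h x t * dx (dx (dx h)) x t / h x t
        - (15/4) * (dx (dx h) x t)^2 / h x t
        + (65/4) * (dx h x t)^2 * dx (dx h) x t / (h x t)^2
        - (135/16) * (dx h x t)^4 / (h x t)^3) x t := by
  intro x t hx0
  have sv : Smooth2 v := hv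
  have hh' : h = fun x t => v x t ^ 4 / dx v x t ^ 2 := by
    funext x t
    rw [hh, zpow_neg, div_eq_mul_inv]
    norm_cast
  obtain ⟨b, hb⟩ : ∃ b : ℝ → ℝ → ℝ, b = fun x t => dx (dx v) x t / dx v x t := ⟨_, rfl⟩
  have sb : Smooth2 b := by
    rw [hb]
    exact ContDiff.div sv.dx.dx sv.dx fun p => hvx p.1 p.2
  have hp : ∀ y, HasDerivAt (fun y => dx v y t) (dx v y t * b y t) y := fun y => by
    have hvy := hvx y t
    refine HasDerivAt.congr_deriv (sv.dx.hasDerivAt_x y t :) ?_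
    rw [hb]
    field_simp
  have hb0 := fun y => sb.hasDerivAt_x y t
  have hb1 := fun y => sb.dx.hasDerivAt_x y t
  have hb2 := fun y => sb.dx.dx.hasDerivAt_x y t
  have hb3 := fun y => sb.dx.dx.dx.hasDerivAt_x y t
  obtain ⟨e1, e2, e3, e4⟩ := log_jets isOpen_univ (fun y _ => hp y) (fun y _ => hb0 y)
    (fun y _ => hb1 y) (fun y _ => hb2 y)
  have hvt : ∀ y, dt v y t = dx v y t * (dx (dx (dx b)) y t - b y t * dx (dx b) y t
      + 3 * dx b y t ^ 2 - 4 * b y t ^ 2 * dx b y t + b y t ^ 4) := fun y => by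
    have f1 : dx (dx v) y t = _ := e1 y trivial
    have f2 : dx (dx (dx v)) y t = _ := e2 y trivial
    have f3 : dx (dx (dx (dx v))) y t = _ := e3 y trivial
    have f4 : dx (dx (dx (dx (dx v)))) y t = _ := e4 y trivial
    rw [heq, f1, f2, f3, f4]
    have hvy := hvx y t
    field_simp
    ring
  have hvxt : dt (dx v) x t = dx v x t * (b x t * (dx (dx (dx b)) x t - b x t * dx (dx b) x t
      + 3 * dx b x t ^ 2 - 4 * b x t ^ 2 * dx b x t + b x t ^ 4)
      + (dx (dx (dx (dx b))) x t - b x t * dx (dx (dx b)) x t + 5 * dx b x t * dx (dx b) x t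
        - 8 * b x t * dx b x t ^ 2 - 4 * b x t ^ 2 * dx (dx b) x t
        + 4 * b x t ^ 3 * dx b x t)) := by
    rw [sv.dt_dx]
    refine deriv_eq_of_eqOn isOpen_univ (f := fun y => dt v y t)
      (g' := fun x => dx v x t * (b x t * (dx (dx (dx b)) x t - b x t * dx (dx b) x t
      + 3 * dx b x t ^ 2 - 4 * b x t ^ 2 * dx b x t + b x t ^ 4)
      + (dx (dx (dx (dx b))) x t - b x t * dx (dx (dx b)) x t + 5 * dx b x t * dx (dx b) x t
        - 8 * b x t * dx b x t ^ 2 - 4 * b x t ^ 2 * dx (dx b) x t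
        + 4 * b x t ^ 3 * dx b x t))) (fun y _ => hvt y) (fun y _ => ?_) x trivial
    refine HasDerivAt.congr_deriv ((hp y).mul (((((hb3 y).sub ((hb0 y).mul (hb2 y))).add
      (((hb1 y).pow 2).const_mul 3)).sub
      ((((hb0 y).pow 2).const_mul 4).mul (hb1 y))).add ((hb0 y).pow 4)) :) ?_
    simp only [Pi.add_apply, Pi.sub_apply, Pi.pow_apply, Pi.mul_apply]
    push_cast
    ring
  have hU : IsOpen {y | v y t ≠ 0} :=
    isOpen_ne_fun (continuous_iff_continuousAt.2 fun y => (sv.hasDerivAt_x y t).continuousAt)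
      continuous_const
  obtain ⟨a, ha⟩ : ∃ a : ℝ → ℝ, a = fun y => dx v y t / v y t := ⟨_, rfl⟩
  have ha0 : ∀ y ∈ {y | v y t ≠ 0}, HasDerivAt a (a y * b y t - a y ^ 2) y := fun y hy => by
    have hy' : v y t ≠ 0 := hy
    rw [ha]
    refine HasDerivAt.congr_deriv ((hp y).div (sv.hasDerivAt_x y t) hy' :) ?_
    field_simp
  have hg0 : ∀ y ∈ {y | v y t ≠ 0}, h y t ≠ 0 := fun y hy => by
    rw [hh']
    exact div_ne_zero (pow_ne_zero _ hy) (pow_ne_zero _ (hvx y t))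
  have hg : ∀ y ∈ {y | v y t ≠ 0},
      HasDerivAt (fun y => h y t) (h y t * (4 * a y - 2 * b y t)) y := fun y hy => by
    have hy' : v y t ≠ 0 := hy
    have hvy := hvx y t
    rw [hh', ha]
    refine HasDerivAt.congr_deriv (((sv.hasDerivAt_x y t).pow 4).div ((hp y).pow 2) (pow_ne_zero _ hvy) :) ?_
    simp only [Pi.pow_apply]
    field_simp
    push_cast
    ring
  have hw : ∀ y ∈ {y | v y t ≠ 0}, HasDerivAt (fun y => 4 * a y - 2 * b y t)
      (4 * (a y * b y t - a y ^ 2) - 2 * dx b y t) y := fun y hy =>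
    ((ha0 y hy).const_mul 4).sub ((hb0 y).const_mul 2)
  have hw1 : ∀ y ∈ {y | v y t ≠ 0},
      HasDerivAt (fun y => 4 * (a y * b y t - a y ^ 2) - 2 * dx b y t)
      (4 * (a y * dx b y t + a y * b y t ^ 2 - 3 * a y ^ 2 * b y t + 2 * a y ^ 3)
        - 2 * dx (dx b) y t) y := fun y hy => by
    refine HasDerivAt.congr_deriv (((((ha0 y hy).mul (hb0 y)).sub ((ha0 y hy).pow 2)).const_mul 4).sub
      ((hb1 y).const_mul 2) :) ?_
    push_cast
    ring
  have hw2 : ∀ y ∈ {y | v y t ≠ 0}, HasDerivAt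
      (fun y => 4 * (a y * dx b y t + a y * b y t ^ 2 - 3 * a y ^ 2 * b y t + 2 * a y ^ 3)
        - 2 * dx (dx b) y t)
      (4 * (a y * dx (dx b) y t + 3 * a y * b y t * dx b y t - 4 * a y ^ 2 * dx b y t
        + a y * b y t ^ 3 - 7 * a y ^ 2 * b y t ^ 2 + 12 * a y ^ 3 * b y t - 6 * a y ^ 4)
        - 2 * dx (dx (dx b)) y t) y := fun y hy => by
    refine HasDerivAt.congr_deriv (((((((ha0 y hy).mul (hb1 y)).add ((ha0 y hy).mul ((hb0 y).pow 2))).sub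
      ((((ha0 y hy).pow 2).const_mul 3).mul (hb0 y))).add
      (((ha0 y hy).pow 3).const_mul 2)).const_mul 4).sub ((hb2 y).const_mul 2) :) ?_
    simp only [Pi.pow_apply]
    push_cast
    ring
  have hw3 : ∀ y ∈ {y | v y t ≠ 0}, HasDerivAt
      (fun y => 4 * (a y * dx (dx b) y t + 3 * a y * b y t * dx b y t - 4 * a y ^ 2 * dx b y t
        + a y * b y t ^ 3 - 7 * a y ^ 2 * b y t ^ 2 + 12 * a y ^ 3 * b y t - 6 * a y ^ 4)
        - 2 * dx (dx (dx b)) y t) _ y := fun y hy =>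
    (((((((((ha0 y hy).mul (hb2 y)).add
      ((((ha0 y hy).const_mul 3).mul (hb0 y)).mul (hb1 y))).sub
      ((((ha0 y hy).pow 2).const_mul 4).mul (hb1 y))).add
      ((ha0 y hy).mul ((hb0 y).pow 3))).sub
      ((((ha0 y hy).pow 2).const_mul 7).mul ((hb0 y).pow 2))).add
      ((((ha0 y hy).pow 3).const_mul 12).mul (hb0 y))).sub
      (((ha0 y hy).pow 4).const_mul 6)).const_mul 4).sub ((hb3 y).const_mul 2)
  have hrhs := deriv_bracket hU hg0 hg hw hw1 hw2 hw3 x hx0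
  have hlhs : dt h x t = h x t * (4 * (dt v x t / v x t) - 2 * (dt (dx v) x t / dx v x t)) := by
    have hvy := hvx x t
    have key := ((sv.hasDerivAt_t x t).pow 4).div ((sv.dx.hasDerivAt_t x t).pow 2)
      (pow_ne_zero _ hvy)
    rw [show (fun s => v x s) ^ 4 / (fun s => dx v x s) ^ 2 = fun s => h x s by
      rw [hh']; rfl] at key
    rw [show dt h x t = _ from key.deriv, hh']
    simp only [Pi.pow_apply]
    field_simp
    push_cast
    ring
  refine Eq.trans ?_ hrhs.symm
  have hK : dt v x t / v x t = a x * (dx (dx (dx b)) x t - b x t * dx (dx b) x t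
      + 3 * dx b x t ^ 2 - 4 * b x t ^ 2 * dx b x t + b x t ^ 4) := by
    rw [hvt, ha]
    ring
  rw [hlhs, hK, hvxt, mul_div_cancel_left₀ _ (hvx x t)]
  congr 1
  simp only [Pi.pow_apply, Pi.mul_apply]
  push_cast
  ring
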